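/- Let I = [x0, x1] be a compact interval with x0 < x1, let D ⊆ ℝ³, and let f : ℝ³ → ℝ³ be continuous. Fix positive reals ε_y, ε_z and integers n > k > 1, set ε̂_z = 2(n−k)ε_z/((n−1)(x1−x0)), and for a graph curve α over I with polynomial coordinate functions write U_α = U(α, ε_y, ε_y, ε_z, ε̂_z) (small u-tube) and V_α = U(α, ε_y, ε_y, k·ε_z, ε̂_z) (big u-tube). Say that U_α maps through V_β if every γ ∈ U_α admits a C¹ function s : I → I with s(I) ⊆ (x0, x1) such that f∘γ∘s is a graph curve lying in the C¹-interior of V_β. Suppose K and L are finite sets of graph curves over I with polynomial coordinates such that the family Ω := ⋃_{α∈K} U_α = ⋃_{β∈L} V_β is nonempty and the two unions are equal, and suppose that for every α ∈ K there exists β ∈ L such that U_α maps through V_β. Then every curve γ ∈ Ω contains a point p in its image with fⁿ(p) ∈ D for all integers n ≥ 1. -/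

import Mathlib

open Set

/-- A graph curve over `I`: a `C¹` map `γ : I → ℝ³` of the form `γ t = (t, γ_y t, γ_z t)`. -/
def IsGraphCurve (I : Set ℝ) (γ : ℝ → ℝ × ℝ × ℝ) : Prop :=
  ContDiffOn ℝ 1 γ I ∧ ∀ t ∈ I, (γ t).1 = t

/-- A graph curve (over all of ℝ) with polynomial coordinate functions. -/
def IsPolyGraphCurve (α : ℝ → ℝ × ℝ × ℝ) : Prop :=
  (∀ t : ℝ, (α t).1 = t) ∧
    (∃ P : Polynomial ℝ, ∀ t : ℝ, (α t).2.1 = Polynomial.eval t P) ∧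
    (∃ Q : Polynomial ℝ, ∀ t : ℝ, (α t).2.2 = Polynomial.eval t Q)

/-- The `C¹`-distance between two curves over `I`. -/
noncomputable def C1dist (I : Set ℝ) (γ δ : ℝ → ℝ × ℝ × ℝ) : ℝ :=
  (⨆ t : I, ‖γ (t : ℝ) - δ (t : ℝ)‖) +
    (⨆ t : I, ‖derivWithin γ I (t : ℝ) - derivWithin δ I (t : ℝ)‖)

/-- `γ` lies in the `C¹`-interior of the family `Ω` of graph curves over `I`. -/
def InC1Interior (I : Set ℝ) (Ω : Set (ℝ → ℝ × ℝ × ℝ)) (γ : ℝ → ℝ × ℝ × ℝ) : Prop :=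
  ∃ δ > 0, ∀ η : ℝ → ℝ × ℝ × ℝ, IsGraphCurve I η → C1dist I γ η < δ → η ∈ Ω

/-- The u-tube `U(α, εy, εy', εz, εz')` around the graph curve `α` over `I`,
consisting of graph curves with image in `D`. -/
def uTube (D : Set (ℝ × ℝ × ℝ)) (I : Set ℝ) (α : ℝ → ℝ × ℝ × ℝ)
    (εy εy' εz εz' : ℝ) : Set (ℝ → ℝ × ℝ × ℝ) :=
  {γ | IsGraphCurve I γ ∧ (∀ t ∈ I, γ t ∈ D) ∧
    (∀ t ∈ I, |(γ t).2.1 - (α t).2.1| ≤ εy) ∧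
    (∀ t ∈ I, |derivWithin (fun u => (γ u).2.1) I t
      - derivWithin (fun u => (α u).2.1) I t| ≤ εy') ∧
    (∀ t ∈ I, |(γ t).2.2 - (α t).2.2| ≤ εz) ∧
    (∀ t ∈ I, |derivWithin (fun u => (γ u).2.2) I t
      - derivWithin (fun u => (α u).2.2) I t| ≤ εz')}

/-- `U` maps through `V` under `f`: every curve of `U` admits a reparametrisation `s`
with values in the interior of `I = [x0, x1]` such that `f ∘ γ ∘ s` is a graph curve
lying in the `C¹`-interior of `V`. -/
def MapsThrough (x0 x1 : ℝ) (f : ℝ × ℝ × ℝ → ℝ × ℝ × ℝ)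
    (U V : Set (ℝ → ℝ × ℝ × ℝ)) : Prop :=
  ∀ γ ∈ U, ∃ s : ℝ → ℝ, ContDiffOn ℝ 1 s (Icc x0 x1) ∧
    (∀ t ∈ Icc x0 x1, s t ∈ Ioo x0 x1) ∧
    IsGraphCurve (Icc x0 x1) (f ∘ γ ∘ s) ∧
    InC1Interior (Icc x0 x1) V (f ∘ γ ∘ s)

/-- If every curve of the family `Ω` maps the compact set `I` into `D`, and its image under `f`
can be reparametrised by a continuous self-map of `I` to a curve of `Ω`, then every curve of `Ω`
carries a point whose forward orbit stays in `D`. -/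
theorem exists_forall_iterate_mem {X E : Type*} [TopologicalSpace X] [T2Space X]
    {I : Set X} (hI : IsCompact I) (hIne : I.Nonempty) {D : Set E} {f : E → E}
    {Ω : Set (X → E)} (hD : ∀ γ ∈ Ω, ∀ t ∈ I, γ t ∈ D)
    (hstep : ∀ γ ∈ Ω, ∃ s : X → X, ContinuousOn s I ∧ MapsTo s I I ∧ f ∘ γ ∘ s ∈ Ω)
    {γ : X → E} (hγ : γ ∈ Ω) : ∃ t ∈ I, ∀ m : ℕ, f^[m] (γ t) ∈ D := by
  have : Nonempty X := hIne.to_type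
  choose! s hs_cont hs_maps hs_mem using hstep
  let c : ℕ → X → E := fun m => Nat.rec γ (fun _ δ => f ∘ δ ∘ s δ) m
  have hc_succ : ∀ m, c (m + 1) = f ∘ c m ∘ s (c m) := fun _ => rfl
  have hc : ∀ m, c m ∈ Ω := by
    intro m
    induction m with
    | zero => exact hγ
    | succ m ih => exact hs_mem _ ih
  let S : ℕ → X → X := fun m => Nat.rec id (fun j σ => σ ∘ s (c j)) m
  have hS_succ : ∀ m, S (m + 1) = S m ∘ s (c m) := fun _ => rfl
  have hS : ∀ m, ContinuousOn (S m) I ∧ MapsTo (S m) I I := by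
    intro m
    induction m with
    | zero => exact ⟨continuousOn_id, mapsTo_id I⟩
    | succ m ih =>
      exact ⟨ih.1.comp (hs_cont _ (hc m)) (hs_maps _ (hc m)), ih.2.comp (hs_maps _ (hc m))⟩
  have horbit : ∀ m t, c m t = f^[m] (γ (S m t)) := by
    intro m
    induction m with
    | zero => exact fun _ => rfl
    | succ m ih =>
      intro t
      rw [hc_succ, hS_succ, Function.iterate_succ_apply']
      exact congrArg f (ih _)
  have hcompact : ∀ m, IsCompact (S m '' I) := fun m => hI.image_of_continuousOn (hS m).1
  obtain ⟨t, ht⟩ := IsCompact.nonempty_iInter_of_sequence_nonempty_isCompact_isClosed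
    (fun m => S m '' I)
    (fun m => by
      rw [hS_succ, image_comp]
      exact image_mono (hs_maps _ (hc m)).image_subset)
    (fun m => hIne.image _) (hcompact 0) (fun m => (hcompact m).isClosed)
  rw [mem_iInter] at ht
  refine ⟨t, ?_, fun m => ?_⟩
  · obtain ⟨u, hu, rfl⟩ := ht 0
    exact hu
  · obtain ⟨u, hu, rfl⟩ := ht m
    rw [← horbit]
    exact hD _ (hc m) u hu

/-- A graph curve in the `C¹`-interior of a family belongs to the family. -/
theorem InC1Interior.mem {I : Set ℝ} {Ω : Set (ℝ → ℝ × ℝ × ℝ)} {γ : ℝ → ℝ × ℝ × ℝ}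
    (h : InC1Interior I Ω γ) (hγ : IsGraphCurve I γ) : γ ∈ Ω := by
  obtain ⟨δ, hδ, hΩ⟩ := h
  exact hΩ γ hγ (by simpa [C1dist] using hδ)

/-- The honest core of Theorem 1: if the nonempty family `Ω` is simultaneously the union of
the small u-tubes around the finitely many curves of `K` and of the big u-tubes around the
finitely many curves of `L`, and every small u-tube maps through some big u-tube, then every
curve of `Ω` carries a point whose forward orbit under `f` stays in `D`. -/
theorem stmt7 (x0 x1 : ℝ) (hx : x0 < x1) (D : Set (ℝ × ℝ × ℝ))
    (f : ℝ × ℝ × ℝ → ℝ × ℝ × ℝ) (hf : Continuous f)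
    (εy εz : ℝ) (hεy : 0 < εy) (hεz : 0 < εz)
    (n k : ℕ) (hk : 1 < k) (hkn : k < n)
    (εz' : ℝ)
    (hεz' : εz' = 2 * ((n : ℝ) - (k : ℝ)) * εz / (((n : ℝ) - 1) * (x1 - x0)))
    (K L : Set (ℝ → ℝ × ℝ × ℝ)) (hKfin : K.Finite) (hLfin : L.Finite)
    (hKpoly : ∀ α ∈ K, IsPolyGraphCurve α) (hLpoly : ∀ β ∈ L, IsPolyGraphCurve β)
    (Ω : Set (ℝ → ℝ × ℝ × ℝ))
    (hΩK : Ω = ⋃ α ∈ K, uTube D (Icc x0 x1) α εy εy εz εz')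
    (hΩL : Ω = ⋃ β ∈ L, uTube D (Icc x0 x1) β εy εy ((k : ℝ) * εz) εz')
    (hne : Ω.Nonempty)
    (hthrough : ∀ α ∈ K, ∃ β ∈ L,
      MapsThrough x0 x1 f (uTube D (Icc x0 x1) α εy εy εz εz')
        (uTube D (Icc x0 x1) β εy εy ((k : ℝ) * εz) εz')) :
    ∀ γ ∈ Ω, ∃ p ∈ γ '' Icc x0 x1, ∀ m : ℕ, 1 ≤ m → f^[m] p ∈ D := by
  intro γ hγ
  have hD : ∀ γ ∈ Ω, ∀ t ∈ Icc x0 x1, γ t ∈ D := by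
    intro γ hγ
    rw [hΩK, mem_iUnion₂] at hγ
    obtain ⟨α, -, hγα⟩ := hγ
    exact hγα.2.1
  have hstep : ∀ γ ∈ Ω, ∃ s : ℝ → ℝ, ContinuousOn s (Icc x0 x1) ∧
      MapsTo s (Icc x0 x1) (Icc x0 x1) ∧ f ∘ γ ∘ s ∈ Ω := by
    intro γ hγ
    rw [hΩK, mem_iUnion₂] at hγ
    obtain ⟨α, hα, hγα⟩ := hγ
    obtain ⟨β, hβ, hαβ⟩ := hthrough α hα
    obtain ⟨s, hs, hsI, hgraph, hint⟩ := hαβ γ hγα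
    refine ⟨s, hs.continuousOn, fun t ht => Ioo_subset_Icc_self (hsI t ht), ?_⟩
    rw [hΩL]
    exact mem_biUnion hβ (hint.mem hgraph)
  obtain ⟨t, ht, horbit⟩ :=
    exists_forall_iterate_mem isCompact_Icc (nonempty_Icc.2 hx.le) hD hstep hγ
  exact ⟨γ t, mem_image_of_mem γ ht, fun m _ => horbit m⟩
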